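/- Let X and Y be pseudocompact Tychonoff spaces and let φ : C*_p(X) → C*_p(Y) be a uniform homeomorphism. For every x ∈ βX there exists y ∈ K(x) with x ∈ K(y), where K(x) ⊆ βY is the support defined via φ^{-1} and K(y) ⊆ βX the support defined via φ. -/

import Mathlib

open scoped ENNReal

/-- `C*(X)`: bounded continuous real-valued functions on `X`; as a subtype of `X → ℝ` it
inherits the uniformity (and topology) of pointwise convergence, giving `C*_p(X)`. -/
abbrev Cstar (X : Type*) [TopologicalSpace X] : Type _ :=
  {f : X → ℝ // Continuous f ∧ ∃ M : ℝ, ∀ x, |f x| ≤ M}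

/-- Given extension operators `eX`, `eY` to the Čech–Stone compactifications and a map
`φ : C*(X) → C*(Y)`, `aFn eX eY φ y K` is
`sup { |φ(f)~(y) − φ(g)~(y)| : f, g ∈ C*(X), |f~ − g~| < 1 on K }` (valued in `ℝ≥0∞`). -/
noncomputable def aFn {X Y : Type*} [TopologicalSpace X] [TopologicalSpace Y]
    (eX : Cstar X → C(StoneCech X, ℝ)) (eY : Cstar Y → C(StoneCech Y, ℝ))
    (φ : Cstar X → Cstar Y) (y : StoneCech Y) (K : Set (StoneCech X)) : ℝ≥0∞ :=
  ⨆ (p : Cstar X × Cstar X) (_ : ∀ x ∈ K, |eX p.1 x - eX p.2 x| < 1),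
    ENNReal.ofReal |eY (φ p.1) y - eY (φ p.2) y|

/-!
Evaluation at `x` is `f ↦ ψ(φ f)~(x)`. The value of `ψ` at `x` is controlled by finitely many
points `y ∈ K(x)`; if for each of them the value of `φ` at `y` were controlled by a compact set
missing `x`, then evaluation at `x` would be controlled by the union of these sets, a compact set
missing `x`, which Urysohn functions rule out.

That finitely many points control `ψ` at `x` is clear for `x ∈ X`, by uniform continuity. The
points controlled by at most `n` points with constant at most `m` form a closed subset of `βX`,
and countably many closed sets covering the pseudocompact space `X` cover `βX`. Controlling closed
sets are stable under finite intersection, so a finite one shrinks to `K(x)` itself.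
-/

open Filter Function Set Uniformity

/-- The functional `θ` is controlled by `K` at scale `r`: functions at distance less than `r` on `K`
have `θ`-values at bounded distance. -/
def ControlledAtScale {A : Type*} [TopologicalSpace A] (θ : C(A, ℝ) → ℝ) (r : ℝ)
    (K : Set A) : Prop :=
  ∃ C : ℝ, ∀ F G : C(A, ℝ), (∀ a ∈ K, |F a - G a| < r) → |θ F - θ G| ≤ C

/-- Control at scale `1`. For `θ F = φ(F)~(y)` this is the condition `a_φ(y, K) < ∞`. -/
abbrev ControlledOn {A : Type*} [TopologicalSpace A] (θ : C(A, ℝ) → ℝ) (K : Set A) : Prop :=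
  ControlledAtScale θ 1 K

/-- The support of a functional: the intersection of all compact sets controlling it. -/
def controlSupport {A : Type*} [TopologicalSpace A] (θ : C(A, ℝ) → ℝ) : Set A :=
  ⋂₀ {K | IsCompact K ∧ ControlledOn θ K}

/-- Every continuous real-valued function is bounded. No separation axiom is included. -/
def Pseudocompact (X : Type*) [TopologicalSpace X] : Prop :=
  ∀ f : X → ℝ, Continuous f → ∃ M : ℝ, ∀ x, |f x| ≤ M

section Control

variable {A B : Type*} [TopologicalSpace A] [TopologicalSpace B] {θ : C(A, ℝ) → ℝ} {K L : Set A}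

theorem ControlledAtScale.rescale {ε : ℝ} (hε : 0 < ε) (h : ControlledAtScale θ ε K) (r : ℝ) :
    ControlledAtScale θ r K := by
  obtain ⟨C, hC⟩ := h
  obtain ⟨n, hn⟩ := exists_nat_gt (max 0 (r / ε))
  have n_pos : (0 : ℝ) < n := (le_max_left _ _).trans_lt hn
  have r_lt : r < n * ε := (div_lt_iff₀ hε).1 ((le_max_right _ _).trans_lt hn)
  refine ⟨n * C, fun F G hFG => ?_⟩
  -- Walk from `F` to `G` along the segment in `n` equal steps.
  let p : ℕ → C(A, ℝ) := fun i => F + ((i : ℝ) / n) • (G - F)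
  have p_zero : p 0 = F := by simp [p]
  have p_last : p n = G := by simp [p, n_pos.ne']
  have p_step (i : ℕ) (a : A) : p i a - p (i + 1) a = (F a - G a) / n := by
    simp only [p, ContinuousMap.add_apply, ContinuousMap.smul_apply, ContinuousMap.sub_apply,
      smul_eq_mul, Nat.cast_succ]
    ring
  have θ_step (i : ℕ) : dist (θ (p i)) (θ (p (i + 1))) ≤ C := by
    refine hC _ _ fun a ha => ?_
    rw [p_step, abs_div, abs_of_pos n_pos, div_lt_iff₀ n_pos, mul_comm]
    exact (hFG a ha).trans r_lt
  calc |θ F - θ G| = dist (θ (p 0)) (θ (p n)) := by rw [p_zero, p_last, Real.dist_eq]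
    _ ≤ ∑ _i ∈ Finset.range n, C := dist_le_range_sum_of_dist_le n fun {i} _ => θ_step i
    _ = n * C := by simp

theorem ControlledAtScale.mono {r : ℝ} (h : ControlledAtScale θ r K) (hKL : K ⊆ L) :
    ControlledAtScale θ r L :=
  h.imp fun _ hC F G hFG => hC F G fun a ha => hFG a (hKL ha)

theorem exists_continuousMap_eq_on_and_abs_sub_lt [NormalSpace A] (hK : IsClosed K)
    (hL : IsClosed L) {r : ℝ} (hr : 0 < r) {F G : C(A, ℝ)}
    (hFG : ∀ a ∈ K ∩ L, |F a - G a| < r) :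
    ∃ H : C(A, ℝ), (∀ a ∈ K, H a = F a) ∧ ∀ a ∈ L, |H a - G a| < r := by
  have far_closed : IsClosed (L ∩ {a | r ≤ |F a - G a|}) :=
    hL.inter (isClosed_le continuous_const (by fun_prop))
  have far_disjoint : Disjoint (L ∩ {a | r ≤ |F a - G a|}) K :=
    disjoint_left.2 fun a ha haK => (hFG a ⟨haK, ha.1⟩).not_ge ha.2
  obtain ⟨u, u_zero, u_one, u_mem⟩ :=
    exists_continuous_zero_one_of_isClosed far_closed hK far_disjoint
  refine ⟨G + u * (F - G), fun a ha => by simp [u_one ha], fun a ha => ?_⟩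
  have abs_eq : |(G + u * (F - G)) a - G a| = u a * |F a - G a| := by
    simp [abs_mul, abs_of_nonneg (u_mem a).1]
  rw [abs_eq]
  rcases le_or_gt r |F a - G a| with far | near
  · simpa [u_zero ⟨ha, far⟩] using hr
  · exact (mul_le_of_le_one_left (abs_nonneg _) (u_mem a).2).trans_lt near

theorem ControlledOn.inter [NormalSpace A] (hK : IsClosed K) (hL : IsClosed L)
    (hθK : ControlledOn θ K) (hθL : ControlledOn θ L) : ControlledOn θ (K ∩ L) := by
  obtain ⟨C, hC⟩ := hθK
  obtain ⟨D, hD⟩ := hθL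
  refine ⟨C + D, fun F G hFG => ?_⟩
  obtain ⟨H, H_eq, H_near⟩ := exists_continuousMap_eq_on_and_abs_sub_lt hK hL one_pos hFG
  calc |θ F - θ G| ≤ |θ F - θ H| + |θ H - θ G| := abs_sub_le _ _ _
    _ ≤ C + D := add_le_add (hC F H fun a ha => by simp [H_eq a ha]) (hD H G H_near)

theorem finite_controlSupport (hK : K.Finite) (h : ControlledOn θ K) :
    (controlSupport θ).Finite :=
  hK.subset (sInter_subset_of_mem ⟨hK.isCompact, h⟩)

theorem controlledOn_controlSupport [T4Space A] (hK : K.Finite) (h : ControlledOn θ K) :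
    ControlledOn θ (controlSupport θ) := by
  classical
  obtain ⟨M, hM⟩ := exists_minimal_of_wellFoundedLT (fun M : Finset A => ControlledOn θ M)
    ⟨hK.toFinset, by rwa [hK.coe_toFinset]⟩
  refine hM.prop.mono (subset_sInter fun L ⟨L_compact, hL⟩ a ha => ?_)
  have inter_controls : ControlledOn θ (M.filter (· ∈ L)) := by
    rw [Finset.coe_filter]
    exact hM.prop.inter M.finite_toSet.isClosed L_compact.isClosed hL
  exact (Finset.mem_filter.1 (hM.le_of_le inter_controls (Finset.filter_subset _ M) ha)).2

theorem ControlledOn.comp {θ : C(B, ℝ) → ℝ} {S : Set B} (hS : S.Finite) (hθ : ControlledOn θ S)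
    {Φ : C(A, ℝ) → C(B, ℝ)} (hΦ : ∀ b ∈ S, ControlledOn (Φ · b) L) :
    ControlledOn (θ ∘ Φ) L := by
  choose! D hD using hΦ
  obtain ⟨M, hM⟩ := (hS.image D).bddAbove
  obtain ⟨C, hC⟩ := hθ.rescale one_pos (M + 1)
  refine ⟨C, fun F G hFG => hC _ _ fun b hb => ?_⟩
  calc |Φ F b - Φ G b| ≤ D b := hD b hb F G hFG
    _ ≤ M := hM (mem_image_of_mem D hb)
    _ < M + 1 := lt_add_one M

theorem mem_of_controlledOn_eval [CompletelyRegularSpace A] (hL : IsClosed L) {a : A}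
    (h : ControlledOn (fun F => F a) L) : a ∈ L := by
  by_contra ha
  obtain ⟨C, hC⟩ := h
  obtain ⟨f, f_cont, f_a, f_L⟩ := CompletelyRegularSpace.completely_regular a L hL ha
  let F : C(A, ℝ) := ⟨fun z => (C + 1) * (1 - f z), by fun_prop⟩
  have F_a : F a = C + 1 := by simp [F, f_a]
  have F_L (z : A) (hz : z ∈ L) : F z = 0 := by simp [F, f_L hz]
  have bound : |F a - 0| ≤ C := hC F 0 fun z hz => by simp [F_L z hz]
  linarith [le_abs_self (F a - 0)]

theorem exists_mem_controlSupport_of_leftInverse [T35Space A] [T4Space B]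
    {Φ : C(A, ℝ) → C(B, ℝ)} {Ψ : C(B, ℝ) → C(A, ℝ)} (hΨΦ : LeftInverse Ψ Φ) {a : A}
    {S : Set B} (hS : S.Finite) (hΨ : ControlledOn (Ψ · a) S) :
    ∃ b ∈ controlSupport (Ψ · a), a ∈ controlSupport (Φ · b) := by
  by_contra! not_mem
  have separated : ∀ b ∈ controlSupport (Ψ · a),
      ∃ L, IsCompact L ∧ ControlledOn (Φ · b) L ∧ a ∉ L := fun b hb => by
    simpa [controlSupport] using not_mem b hb
  choose! L L_compact L_controls ha using separated
  have supp_finite := finite_controlSupport hS hΨ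
  have union_closed : IsClosed (⋃ b ∈ controlSupport (Ψ · a), L b) :=
    supp_finite.isClosed_biUnion fun b hb => (L_compact b hb).isClosed
  have union_controls : ControlledOn ((Ψ · a) ∘ Φ) (⋃ b ∈ controlSupport (Ψ · a), L b) :=
    (controlledOn_controlSupport hS hΨ).comp supp_finite
      fun b hb => (L_controls b hb).mono (subset_biUnion_of_mem hb)
  have a_mem : a ∈ ⋃ b ∈ controlSupport (Ψ · a), L b :=
    mem_of_controlledOn_eval union_closed (by simpa [comp_def, hΨΦ _] using union_controls)
  obtain ⟨b, hb, hab⟩ := mem_iUnion₂.1 a_mem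
  exact ha b hb hab

theorem isClosed_setOf_exists_fin_control [CompactSpace A] (Φ : C(A, ℝ) → C(B, ℝ)) (n : ℕ)
    (C : ℝ) :
    IsClosed {b | ∃ k : Fin n → A, ∀ F G : C(A, ℝ), (∀ i, |F (k i) - G (k i)| < 1) →
      |Φ F b - Φ G b| ≤ C} := by
  let Z : Set ((Fin n → A) × B) := {q | ∀ F G : C(A, ℝ),
    (∀ i, |F (q.1 i) - G (q.1 i)| < 1) → |Φ F q.2 - Φ G q.2| ≤ C}
  have Z_closed : IsClosed Z := by
    simp only [Z, ofPred_forall, imp_iff_not_or, ofPred_or, not_forall, not_lt, ofPred_exists]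
    refine isClosed_iInter fun F => isClosed_iInter fun G => IsClosed.union ?_ ?_
    · exact isClosed_iUnion_of_finite fun i => isClosed_le continuous_const (by fun_prop)
    · exact isClosed_le (by fun_prop) continuous_const
  convert isClosedMap_snd_of_compactSpace Z Z_closed using 1
  ext b
  simp [Z]

end Control

section Pseudocompact

variable {A B X : Type*} [TopologicalSpace A] [TopologicalSpace B] [TopologicalSpace X]

theorem exists_continuousMap_eq_zero_of_isGδ [CompletelyRegularSpace A] {U : Set A}
    (hU : IsGδ U) {a : A} (ha : a ∈ U) :
    ∃ g : C(A, ℝ), g a = 0 ∧ ∀ z, g z = 0 → z ∈ U := by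
  obtain ⟨V, V_open, rfl⟩ := hU.eq_iInter_nat
  have separated (n : ℕ) := CompletelyRegularSpace.completely_regular a (V n)ᶜ
    (V_open n).isClosed_compl (not_not.2 (mem_iInter.1 ha n))
  choose f f_cont f_a f_one using separated
  let g (n : ℕ) (z : A) : ℝ := (1 / 2) ^ n * f n z
  have g_nonneg (n z) : 0 ≤ g n z := mul_nonneg (by positivity) (f n z).2.1
  have g_le (n z) : g n z ≤ (1 / 2) ^ n :=
    mul_le_of_le_one_right (by positivity) (f n z).2.2
  have g_summable (z) : Summable (g · z) :=
    .of_nonneg_of_le (g_nonneg · z) (g_le · z) summable_geometric_two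
  have tsum_cont : Continuous fun z => ∑' n, g n z :=
    continuous_tsum (fun n => by fun_prop) summable_geometric_two
      fun n z => (Real.norm_of_nonneg (g_nonneg n z)).trans_le (g_le n z)
  refine ⟨⟨_, tsum_cont⟩, by simp [g, f_a], fun z hz => mem_iInter.2 fun n => ?_⟩
  by_contra hzn
  have g_pos : 0 < g n z := by simp [g, f_one n hzn]
  exact ((g_summable z).tsum_pos (g_nonneg · z) n g_pos).ne' hz

theorem Pseudocompact.exists_apply_eq_zero (hX : Pseudocompact X) {i : X → A} (hi : Continuous i)
    (hd : DenseRange i) {g : C(A, ℝ)} {a : A} (ha : g a = 0) : ∃ x, g (i x) = 0 := by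
  by_contra! g_ne
  obtain ⟨M, hM⟩ := hX (fun x => (g (i x))⁻¹) ((g.continuous.comp hi).inv₀ g_ne)
  have one_le (z : A) : 1 ≤ M * |g z| := by
    refine hd.induction_on z (isClosed_le continuous_const (by fun_prop)) fun x => ?_
    calc 1 = |(g (i x))⁻¹| * |g (i x)| := by rw [← abs_mul, inv_mul_cancel₀ (g_ne x), abs_one]
      _ ≤ M * |g (i x)| := mul_le_mul_of_nonneg_right (hM x) (abs_nonneg _)
  exact absurd (one_le a) (by simp [ha])

theorem Pseudocompact.iUnion_eq_univ {ι : Type*} [Countable ι] [CompletelyRegularSpace A]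
    (hX : Pseudocompact X) {i : X → A} (hi : Continuous i) (hd : DenseRange i) {Z : ι → Set A}
    (hZ : ∀ j, IsClosed (Z j)) (hcover : range i ⊆ ⋃ j, Z j) : ⋃ j, Z j = univ := by
  refine eq_univ_of_forall fun a => ?_
  by_contra ha
  have compl_Gδ : IsGδ (⋃ j, Z j)ᶜ := by
    rw [compl_iUnion]
    exact .iInter_of_isOpen fun j => (hZ j).isOpen_compl
  obtain ⟨g, g_a, g_zero⟩ := exists_continuousMap_eq_zero_of_isGδ compl_Gδ ha
  obtain ⟨x, hx⟩ := hX.exists_apply_eq_zero hi hd g_a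
  exact g_zero _ hx (hcover (mem_range_self x))

theorem Pseudocompact.exists_finite_controlledOn [CompactSpace A] [CompletelyRegularSpace B]
    (hX : Pseudocompact X) {i : X → B} (hi : Continuous i) (hd : DenseRange i)
    {Φ : C(A, ℝ) → C(B, ℝ)} (hΦ : ∀ x, ∃ K : Set A, K.Finite ∧ ControlledOn (Φ · (i x)) K)
    (b : B) : ∃ K : Set A, K.Finite ∧ ControlledOn (Φ · b) K := by
  let Z (q : ℕ × ℕ) : Set B := {b | ∃ k : Fin q.1 → A, ∀ F G : C(A, ℝ),
    (∀ j, |F (k j) - G (k j)| < 1) → |Φ F b - Φ G b| ≤ (q.2 : ℝ)}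
  have range_subset : range i ⊆ ⋃ q, Z q := by
    rintro _ ⟨x, rfl⟩
    obtain ⟨K, K_finite, C, hC⟩ := hΦ x
    obtain ⟨n, k, -, rfl⟩ := K_finite.fin_param
    obtain ⟨m, hm⟩ := exists_nat_ge C
    exact mem_iUnion.2 ⟨(n, m), k, fun F G hFG =>
      (hC F G (forall_mem_range.2 hFG)).trans hm⟩
  have cover := hX.iUnion_eq_univ hi hd
    (fun q : ℕ × ℕ => isClosed_setOf_exists_fin_control Φ q.1 q.2) range_subset
  obtain ⟨q, k, hk⟩ := mem_iUnion.1 (cover ▸ mem_univ b)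
  exact ⟨range k, finite_range k, q.2, fun F G hFG => hk F G (forall_mem_range.1 hFG)⟩

end Pseudocompact

theorem hasBasis_uniformity_pi {ι κ E : Type*} [UniformSpace E] {p : κ → Prop}
    {s : κ → Set (E × E)} (h : (𝓤 E).HasBasis p s) :
    (𝓤 (ι → E)).HasBasis (fun Ik : Set ι × κ => Ik.1.Finite ∧ p Ik.2)
      fun Ik => {fg | ∀ i ∈ Ik.1, (fg.1 i, fg.2 i) ∈ s Ik.2} := by
  have uniformity_eq : 𝓤 (ι → E) =
      comap (fun (fg : (ι → E) × (ι → E)) i => (fg.1 i, fg.2 i)) (Filter.pi fun _ => 𝓤 E) := by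
    simp only [Pi.uniformity, Filter.pi, comap_iInf, comap_comap, comp_def, eval]
  rw [uniformity_eq]
  exact h.pi_self.comap _

section Cstar

variable {X Y : Type*} [TopologicalSpace X] [TopologicalSpace Y]

/-- The restriction to `X` of a continuous function on `βX`; it is inverse to every operator
extending functions from `X` to `βX`. -/
def Cstar.restrict (F : C(StoneCech X, ℝ)) : Cstar X :=
  ⟨fun x => F (stoneCechUnit x), F.continuous.comp continuous_stoneCechUnit,
    ‖F‖, fun _ => F.norm_coe_le_norm _⟩

theorem Cstar.extension_restrict {e : Cstar X → C(StoneCech X, ℝ)}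
    (he : ∀ f x, e f (stoneCechUnit x) = f.1 x) (F : C(StoneCech X, ℝ)) :
    e (restrict F) = F :=
  DFunLike.coe_injective <| denseRange_stoneCechUnit.equalizer (e _).continuous F.continuous <|
    funext (he _)

theorem Cstar.restrict_extension {e : Cstar X → C(StoneCech X, ℝ)}
    (he : ∀ f x, e f (stoneCechUnit x) = f.1 x) (f : Cstar X) : restrict (e f) = f :=
  Subtype.ext (funext (he f))

theorem aFn_lt_top_iff {eX : Cstar X → C(StoneCech X, ℝ)}
    (heX : ∀ f x, eX f (stoneCechUnit x) = f.1 x) {eY : Cstar Y → C(StoneCech Y, ℝ)}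
    {φ : Cstar X → Cstar Y} {y : StoneCech Y} {K : Set (StoneCech X)} :
    aFn eX eY φ y K < ⊤ ↔ ControlledOn (fun F => eY (φ (Cstar.restrict F)) y) K := by
  constructor
  · refine fun h => ⟨(aFn eX eY φ y K).toReal, fun F G hFG => ?_⟩
    rw [← ENNReal.ofReal_le_iff_le_toReal h.ne]
    refine le_iSup₂_of_le (Cstar.restrict F, Cstar.restrict G) ?_ le_rfl
    simpa only [Cstar.extension_restrict heX] using hFG
  · rintro ⟨C, hC⟩
    refine (iSup₂_le fun p hp => ENNReal.ofReal_le_ofReal ?_).trans_lt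
      (ENNReal.ofReal_lt_top (r := C))
    simpa only [Cstar.restrict_extension heX] using hC (eX p.1) (eX p.2) hp

theorem exists_finite_controlledOn_of_uniformContinuous {θ : Cstar X → ℝ}
    (hθ : UniformContinuous θ) :
    ∃ K : Set (StoneCech X), K.Finite ∧ ControlledOn (fun F => θ (Cstar.restrict F)) K := by
  have basis := (hasBasis_uniformity_pi (ι := X) (Metric.uniformity_basis_dist (α := ℝ))).comap
    (fun fg : Cstar X × Cstar X => (fg.1.1, fg.2.1))
  rw [← uniformity_subtype] at basis
  obtain ⟨⟨I, ε⟩, ⟨I_finite, ε_pos⟩, hI⟩ :=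
    (basis.uniformContinuous_iff Metric.uniformity_basis_dist).1 hθ 1 one_pos
  have control : ControlledAtScale (fun F => θ (Cstar.restrict F)) ε (stoneCechUnit '' I) :=
    ⟨1, fun F G hFG => (hI (Cstar.restrict F) (Cstar.restrict G)
      fun x hx => hFG _ (mem_image_of_mem _ hx)).le⟩
  exact ⟨_, I_finite.image _, control.rescale ε_pos 1⟩

theorem Pseudocompact.exists_finite_controlledOn_extension (hX : Pseudocompact X)
    {ψ : Cstar Y → Cstar X} (hψ : UniformContinuous ψ) {eX : Cstar X → C(StoneCech X, ℝ)}
    (heX : ∀ f x, eX f (stoneCechUnit x) = f.1 x) (x : StoneCech X) :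
    ∃ K : Set (StoneCech Y), K.Finite ∧ ControlledOn (fun F => eX (ψ (Cstar.restrict F)) x) K := by
  refine hX.exists_finite_controlledOn (Φ := fun F => eX (ψ (Cstar.restrict F)))
    continuous_stoneCechUnit denseRange_stoneCechUnit (fun x => ?_) x
  simp only [heX]
  exact exists_finite_controlledOn_of_uniformContinuous (θ := fun f => (ψ f).1 x)
    ((Pi.uniformContinuous_proj _ x).comp (uniformContinuous_subtype_val.comp hψ))

end Cstar

theorem exists_mem_support_back_general {X Y : Type*} [TopologicalSpace X]
    [TopologicalSpace Y] (φ : Cstar X → Cstar Y) (ψ : Cstar Y → Cstar X)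
    (hψ : UniformContinuous ψ) (hinv : LeftInverse ψ φ)
    (eX : Cstar X → C(StoneCech X, ℝ)) (heX : ∀ f x, eX f (stoneCechUnit x) = f.1 x)
    (eY : Cstar Y → C(StoneCech Y, ℝ)) (heY : ∀ g y, eY g (stoneCechUnit y) = g.1 y)
    (hX : Pseudocompact X) (x : StoneCech X) :
    ∃ y ∈ ⋂₀ {K : Set (StoneCech Y) | IsCompact K ∧ aFn eY eX ψ x K < ⊤},
      x ∈ ⋂₀ {K : Set (StoneCech X) | IsCompact K ∧ aFn eX eY φ y K < ⊤} := by
  have extended_inverse : LeftInverse (fun G => eX (ψ (Cstar.restrict G)))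
      (fun F => eY (φ (Cstar.restrict F))) := fun F => by
    simp only [Cstar.restrict_extension heY, hinv _, Cstar.extension_restrict heX]
  obtain ⟨S, S_finite, hS⟩ := hX.exists_finite_controlledOn_extension hψ heX x
  simp only [aFn_lt_top_iff heX, aFn_lt_top_iff heY]
  exact exists_mem_controlSupport_of_leftInverse extended_inverse S_finite hS

/-- Let `X`, `Y` be pseudocompact Tychonoff spaces and `φ : C*_p(X) → C*_p(Y)` a uniform
homeomorphism with inverse `ψ`. For every `x ∈ βX` there is `y ∈ K(x)` with `x ∈ K(y)`,
where `K(x) ⊆ βY` is the support defined via `ψ = φ⁻¹` and `K(y) ⊆ βX` the support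
defined via `φ`. -/
theorem exists_mem_support_back
    {X Y : Type*} [TopologicalSpace X] [T35Space X] [TopologicalSpace Y] [T35Space Y]
    (φ : Cstar X → Cstar Y) (ψ : Cstar Y → Cstar X)
    (hφ : UniformContinuous φ) (hψ : UniformContinuous ψ)
    (hinv₁ : Function.LeftInverse ψ φ) (hinv₂ : Function.RightInverse ψ φ)
    (eX : Cstar X → C(StoneCech X, ℝ)) (heX : ∀ f x, eX f (stoneCechUnit x) = f.1 x)
    (eY : Cstar Y → C(StoneCech Y, ℝ)) (heY : ∀ g y, eY g (stoneCechUnit y) = g.1 y)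
    (hXpc : ∀ f : X → ℝ, Continuous f → ∃ M : ℝ, ∀ x, |f x| ≤ M)
    (hYpc : ∀ f : Y → ℝ, Continuous f → ∃ M : ℝ, ∀ y, |f y| ≤ M) :
    ∀ x : StoneCech X,
      ∃ y ∈ ⋂₀ {K : Set (StoneCech Y) | IsCompact K ∧ aFn eY eX ψ x K < ⊤},
        x ∈ ⋂₀ {K : Set (StoneCech X) | IsCompact K ∧ aFn eX eY φ y K < ⊤} :=
  exists_mem_support_back_general φ ψ hψ hinv₁ eX heX eY heY hXpc
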